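/- arXiv:2602.07368 — 4 statements merged into one kernel-verified Lean document; each statement's English description precedes it below -/
import Mathlib

section
/- Let (B, A, i, e, l) be a cleft extension of abelian categories in which A and B have arbitrary coproducts, and let σ : B₁ → B₂ be a morphism in B. If i preserves coproducts and the class D_{l(σ)} is closed under coproducts, then D_σ is closed under coproducts; conversely, if e preserves coproducts and D_σ is closed under coproducts, then D_{l(σ)} is closed under coproducts. -/
open CategoryTheory Limits

universe v u₁ u₂

/-- For a morphism `σ : X ⟶ Y` in a category `C`, `DClass σ` is the class of objects `L`
such that `Hom_C(σ, L) : Hom_C(Y, L) → Hom_C(X, L)` is surjective. -/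
def DClass {C : Type u₁} [Category.{v} C] {X Y : C} (σ : X ⟶ Y) (L : C) : Prop :=
  Function.Surjective (fun g : Y ⟶ L => σ ≫ g)

/-- A class of objects of `C` is closed under coproducts if it contains the coproduct of any
family of its members. -/
def ClosedUnderCoproducts {C : Type u₁} [Category.{v} C] [HasCoproducts.{v} C]
    (P : C → Prop) : Prop :=
  ∀ (I : Type v) (f : I → C), (∀ j, P (f j)) → P (∐ f)

theorem dclass_iso {C : Type u₁} [Category.{v} C] {X Y : C} (σ : X ⟶ Y) {L M : C}
    (a : L ≅ M) (h : DClass σ L) : DClass σ M := by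
  intro g
  obtain ⟨k, hk⟩ := h (g ≫ a.inv)
  refine ⟨k ≫ a.hom, ?_⟩
  have hk' : σ ≫ k = g ≫ a.inv := hk
  change σ ≫ k ≫ a.hom = g
  rw [← Category.assoc, hk', Category.assoc, a.inv_hom_id, Category.comp_id]

theorem dclass_adj {A : Type u₁} {B : Type u₂} [Category.{v} A] [Category.{v} B]
    {e : A ⥤ B} {l : B ⥤ A} (adj : l ⊣ e) {B₁ B₂ : B} (σ : B₁ ⟶ B₂) (L : A) :
    DClass (l.map σ) L ↔ DClass σ (e.obj L) := by
  constructor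
  · intro h g
    obtain ⟨k, hk⟩ := h ((adj.homEquiv _ _).symm g)
    refine ⟨adj.homEquiv _ _ k, ?_⟩
    have hk' : l.map σ ≫ k = (adj.homEquiv _ _).symm g := hk
    change σ ≫ adj.homEquiv _ _ k = g
    rw [← adj.homEquiv_naturality_left, hk', Equiv.apply_symm_apply]
  · intro h g
    obtain ⟨k, hk⟩ := h (adj.homEquiv _ _ g)
    refine ⟨(adj.homEquiv _ _).symm k, ?_⟩
    have hk' : σ ≫ k = adj.homEquiv _ _ g := hk
    change l.map σ ≫ (adj.homEquiv _ _).symm k = g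
    rw [← adj.homEquiv_naturality_left_symm, hk', Equiv.symm_apply_apply]

/-- Let `(B, A, i, e, l)` be a cleft extension of abelian categories with
arbitrary coproducts and `σ : B₁ ⟶ B₂` a morphism in `B`. If `i` preserves coproducts and
`D_{l(σ)}` is closed under coproducts, then so is `D_σ`; conversely, if `e` preserves coproducts
and `D_σ` is closed under coproducts, then so is `D_{l(σ)}`. -/
theorem stmt6 {A : Type u₁} {B : Type u₂} [Category.{v} A] [Category.{v} B]
    [Abelian A] [Abelian B] [EnoughProjectives A] [EnoughProjectives B]
    [HasCoproducts.{v} A] [HasCoproducts.{v} B]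
    (i : B ⥤ A) (e : A ⥤ B) (l : B ⥤ A) [e.Faithful]
    [PreservesFiniteLimits e] [PreservesFiniteColimits e]
    (adj : l ⊣ e) (η : i ⋙ e ≅ 𝟭 B)
    {B₁ B₂ : B} (σ : B₁ ⟶ B₂) :
    ((∀ J : Type v, PreservesColimitsOfShape (Discrete J) i) →
      ClosedUnderCoproducts (DClass (l.map σ)) → ClosedUnderCoproducts (DClass σ)) ∧
    ((∀ J : Type v, PreservesColimitsOfShape (Discrete J) e) →
      ClosedUnderCoproducts (DClass σ) → ClosedUnderCoproducts (DClass (l.map σ))) := by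
  constructor
  · intro hi h I f hf
    haveI := hi I
    refine dclass_iso σ (η.app (∐ f)) ((dclass_adj adj σ (i.obj (∐ f))).1 ?_)
    refine dclass_iso _ (PreservesCoproduct.iso i f).symm (h I (fun j => i.obj (f j)) ?_)
    intro j
    exact (dclass_adj adj σ _).2 (dclass_iso σ (η.app (f j)).symm (hf j))
  · intro he h I f hf
    haveI := he I
    refine (dclass_adj adj σ _).2 ?_
    refine dclass_iso _ (PreservesCoproduct.iso e f).symm (h I (fun j => e.obj (f j)) ?_)
    intro j
    exact (dclass_adj adj σ _).1 (hf j)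
end

section
/- Let (B, A, i, e, l) be a cleft extension of abelian categories in which A and B have arbitrary coproducts and both i and e preserve coproducts, and let P₁ →σ P₀ → B → 0 be a projective presentation of B in B. Then l(B) is a partial silting object of A with respect to l(σ) if and only if B is a partial silting object of B with respect to σ and F(B) ∈ D_σ, where F(B) := e(ker(μ_{i(B)})) and μ is the counit of (l, e). -/
open CategoryTheory Limits

universe v u₁ u₂

/-- Given a morphism `σ` occurring in a projective presentation `P₁ ⟶ P₀ ⟶ X ⟶ 0`, the object
`X` is partial silting with respect to `σ` if `X ∈ D_σ` and `D_σ` is closed under coproducts. -/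
def IsPartialSilting {C : Type u₁} [Category.{v} C] [HasCoproducts.{v} C]
    {P₁ P₀ : C} (σ : P₁ ⟶ P₀) (X : C) : Prop :=
  DClass σ X ∧ ClosedUnderCoproducts (DClass σ)

theorem DClass.retract' {C : Type u₁} [Category.{v} C] {X Y : C} {σ : X ⟶ Y} {L M : C}
    (h : DClass σ L) (s : M ⟶ L) (r : L ⟶ M) (hs : s ≫ r = 𝟙 M) : DClass σ M := by
  intro f
  obtain ⟨g, hg⟩ := h (f ≫ s)
  refine ⟨g ≫ r, ?_⟩
  dsimp only at hg ⊢
  rw [← Category.assoc, hg, Category.assoc, hs, Category.comp_id]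

theorem DClass.iso' {C : Type u₁} [Category.{v} C] {X Y : C} {σ : X ⟶ Y} {L M : C}
    (φ : L ≅ M) : DClass σ L ↔ DClass σ M :=
  ⟨fun h => h.retract' φ.inv φ.hom φ.inv_hom_id, fun h => h.retract' φ.hom φ.inv φ.hom_inv_id⟩

theorem DClass.adj' {A : Type u₁} {B : Type u₂} [Category.{v} A] [Category.{v} B]
    {e : A ⥤ B} {l : B ⥤ A} (adj : l ⊣ e) {X Y : B} (σ : X ⟶ Y) (L : A) :
    DClass (l.map σ) L ↔ DClass σ (e.obj L) := by
  constructor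
  · intro h f
    obtain ⟨g, hg⟩ := h ((adj.homEquiv _ _).symm f)
    refine ⟨adj.homEquiv _ _ g, ?_⟩
    dsimp only at hg ⊢
    rw [← adj.homEquiv_naturality_left, hg, Equiv.apply_symm_apply]
  · intro h f
    obtain ⟨g, hg⟩ := h (adj.homEquiv _ _ f)
    refine ⟨(adj.homEquiv _ _).symm g, ?_⟩
    dsimp only at hg ⊢
    rw [← adj.homEquiv_naturality_left_symm, hg, Equiv.symm_apply_apply]

theorem DClass.split' {C : Type u₁} [Category.{v} C] [Preadditive C] {X Y : C} {σ : X ⟶ Y}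
    {K E Q : C} (k : K ⟶ E) (q : E ⟶ K) (p : E ⟶ Q) (s : Q ⟶ E)
    (hkq : k ≫ q = 𝟙 K) (hsp : s ≫ p = 𝟙 Q) (hid : p ≫ s + q ≫ k = 𝟙 E) :
    DClass σ E ↔ DClass σ Q ∧ DClass σ K := by
  refine ⟨fun h => ⟨h.retract' s p hsp, h.retract' k q hkq⟩, fun ⟨h1, h2⟩ f => ?_⟩
  obtain ⟨g1, hg1⟩ := h1 (f ≫ p)
  obtain ⟨g2, hg2⟩ := h2 (f ≫ q)
  refine ⟨g1 ≫ s + g2 ≫ k, ?_⟩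
  dsimp only at hg1 hg2 ⊢
  rw [Preadditive.comp_add, ← Category.assoc, hg1, ← Category.assoc, hg2, Category.assoc,
    Category.assoc, ← Preadditive.comp_add, hid, Category.comp_id]

theorem DClass.ker' {A : Type u₁} {B : Type u₂} [Category.{v} A] [Category.{v} B]
    [Abelian A] [Abelian B] (e : A ⥤ B) [PreservesFiniteLimits e] [PreservesFiniteColimits e]
    {P Q : B} (σ : P ⟶ Q) {X Y : A} (μ : X ⟶ Y) (u : e.obj Y ⟶ e.obj X)
    (hsp : u ≫ e.map μ = 𝟙 _) :
    DClass σ (e.obj X) ↔ DClass σ (e.obj Y) ∧ DClass σ (e.obj (kernel μ)) := by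
  have : e.PreservesZeroMorphisms := inferInstance
  have hS : (ShortComplex.mk (kernel.ι μ) μ (kernel.condition μ)).Exact :=
    ShortComplex.exact_of_f_is_kernel _ (kernelIsKernel μ)
  have hS' := hS.map e
  have hm : Mono ((ShortComplex.mk (kernel.ι μ) μ (kernel.condition μ)).map e).f :=
    inferInstanceAs (Mono (e.map (kernel.ι μ)))
  have h0 : (𝟙 (e.obj X) - e.map μ ≫ u) ≫ e.map μ = 0 := by
    rw [Preadditive.sub_comp, Category.assoc, hsp]
    simp
  obtain ⟨q, hq⟩ : ∃ q : e.obj X ⟶ e.obj (kernel μ),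
      q ≫ e.map (kernel.ι μ) = 𝟙 (e.obj X) - e.map μ ≫ u :=
    ⟨hS'.lift _ h0, hS'.lift_f _ h0⟩
  refine DClass.split' (e.map (kernel.ι μ)) q (e.map μ) u ?_ hsp ?_
  · rw [← cancel_mono (e.map (kernel.ι μ)), Category.assoc, hq, Preadditive.comp_sub,
      ← Category.assoc, ← e.map_comp, kernel.condition]
    simp
  · rw [hq]; abel

/-- Let `(B, A, i, e, l)` be a cleft extension of abelian categories with
arbitrary coproducts in which `i` and `e` preserve coproducts, and let
`P₁ ⟶σ P₀ ⟶π Bo ⟶ 0` be a projective presentation of `Bo` in `B`. Then `l(Bo)` is partial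
silting in `A` with respect to `l(σ)` if and only if `Bo` is partial silting in `B` with respect
to `σ` and `F(Bo) ∈ D_σ`, where `F(Bo) := e(ker(μ_{i(Bo)}))` and `μ` is the counit of `(l, e)`. -/
theorem stmt7 {A : Type u₁} {B : Type u₂} [Category.{v} A] [Category.{v} B]
    [Abelian A] [Abelian B] [EnoughProjectives A] [EnoughProjectives B]
    [HasCoproducts.{v} A] [HasCoproducts.{v} B]
    (i : B ⥤ A) (e : A ⥤ B) (l : B ⥤ A) [e.Faithful]
    [PreservesFiniteLimits e] [PreservesFiniteColimits e]
    [∀ J : Type v, PreservesColimitsOfShape (Discrete J) i]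
    [∀ J : Type v, PreservesColimitsOfShape (Discrete J) e]
    (adj : l ⊣ e) (η : i ⋙ e ≅ 𝟭 B)
    {P₁ P₀ Bo : B} (σ : P₁ ⟶ P₀) (π : P₀ ⟶ Bo)
    (hP₁ : Projective P₁) (hP₀ : Projective P₀) [Epi π]
    (w : σ ≫ π = 0) (hexact : (ShortComplex.mk σ π w).Exact) :
    IsPartialSilting (l.map σ) (l.obj Bo) ↔
      IsPartialSilting σ Bo ∧ DClass σ (e.obj (kernel (adj.counit.app (i.obj Bo)))) := by
  have hsplit : DClass (l.map σ) (l.obj Bo) ↔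
      DClass σ Bo ∧ DClass σ (e.obj (kernel (adj.counit.app (i.obj Bo)))) := by
    rw [DClass.adj' adj]
    let φ : e.obj (i.obj Bo) ≅ Bo := η.app Bo
    rw [← DClass.iso' (e.mapIso (l.mapIso φ)), ← DClass.iso' φ]
    exact DClass.ker' e σ (adj.counit.app (i.obj Bo)) (adj.unit.app (e.obj (i.obj Bo)))
      (adj.right_triangle_components _)
  have hcop : ClosedUnderCoproducts (DClass (l.map σ)) ↔ ClosedUnderCoproducts (DClass σ) := by
    constructor
    · intro h I f hf
      have h1 := h I (fun j => i.obj (f j)) (fun j => by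
        rw [DClass.adj' adj]
        exact (DClass.iso' (η.app (f j))).2 (hf j))
      rw [DClass.adj' adj] at h1
      refine (DClass.iso' (PreservesCoproduct.iso e (fun j => i.obj (f j)) ≪≫
        Sigma.mapIso (fun j => η.app (f j)))).1 h1
    · intro h I f hf
      rw [DClass.adj' adj]
      exact (DClass.iso' (PreservesCoproduct.iso e f)).2
        (h I _ (fun j => (DClass.adj' adj σ _).1 (hf j)))
  unfold IsPartialSilting
  rw [hsplit, hcop]
  tauto
end

section
/- Let (B, A, i, e, l) be a cleft extension of abelian categories in which A and B have arbitrary coproducts and i preserves coproducts, let q : A → B be a left adjoint of i, and let l(P₁) →δ l(P₀) → A → 0 be a projective presentation of an object A of A with P₀, P₁ projective in B. If A is silting (respectively, partial silting) with respect to δ, then q(A) is silting (respectively, partial silting) with respect to q(δ), where P₁ ≅ q(l(P₁)) →q(δ) q(l(P₀)) ≅ P₀ → q(A) → 0 is the induced projective presentation. -/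
open CategoryTheory Limits

universe v u₁ u₂

/-- `Gen X` is the class of epimorphic images of coproducts of copies of `X`. -/
def Gen {C : Type u₁} [Category.{v} C] [HasCoproducts.{v} C] (X L : C) : Prop :=
  ∃ (I : Type v) (p : (∐ fun _ : I => X) ⟶ L), Epi p

/-- Given a morphism `σ` occurring in a projective presentation `P₁ ⟶ P₀ ⟶ X ⟶ 0`, the object
`X` is silting with respect to `σ` if `Gen X = D_σ`. -/
def IsSilting {C : Type u₁} [Category.{v} C] [HasCoproducts.{v} C]
    {P₁ P₀ : C} (σ : P₁ ⟶ P₀) (X : C) : Prop :=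
  ∀ L : C, Gen X L ↔ DClass σ L

theorem dclass_adj_s14 {A : Type u₁} {B : Type u₂} [Category.{v} A] [Category.{v} B]
    {q : A ⥤ B} {i : B ⥤ A} (adjq : q ⊣ i) {X Y : A} (δ : X ⟶ Y) (L : B) :
    DClass (q.map δ) L ↔ DClass δ (i.obj L) := by
  constructor
  · intro h f
    obtain ⟨g, hg⟩ := h ((adjq.homEquiv _ _).symm f)
    refine ⟨adjq.homEquiv _ _ g, ?_⟩
    dsimp only at hg ⊢
    rw [← adjq.homEquiv_naturality_left, hg, Equiv.apply_symm_apply]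
  · intro h f
    obtain ⟨g, hg⟩ := h (adjq.homEquiv _ _ f)
    refine ⟨(adjq.homEquiv _ _).symm g, ?_⟩
    dsimp only at hg ⊢
    rw [← adjq.homEquiv_naturality_left_symm, hg, Equiv.symm_apply_apply]

theorem dclass_epi {A : Type u₁} [Category.{v} A] {X Y L M : A} [Projective X] (δ : X ⟶ Y)
    (p : L ⟶ M) [Epi p] (h : DClass δ L) : DClass δ M := by
  intro f
  obtain ⟨g, hg⟩ := h (Projective.factorThru f p)
  refine ⟨g ≫ p, ?_⟩
  dsimp only at hg ⊢
  rw [← Category.assoc, hg, Projective.factorThru_comp]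

/-- Let `(B, A, i, e, l)` be a cleft extension of abelian categories with
arbitrary coproducts in which `i` preserves coproducts, let `q : A ⥤ B` be a left adjoint of
`i`, and let `l(P₁) ⟶δ l(P₀) ⟶π Ao ⟶ 0` be a projective presentation of an object `Ao` of `A`
with `P₀, P₁` projective in `B`. If `Ao` is silting (resp. partial silting) with respect to `δ`,
then `q(Ao)` is silting (resp. partial silting) with respect to `q(δ)`. -/
theorem stmt14 {A : Type u₁} {B : Type u₂} [Category.{v} A] [Category.{v} B]
    [Abelian A] [Abelian B] [EnoughProjectives A] [EnoughProjectives B]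
    [HasCoproducts.{v} A] [HasCoproducts.{v} B]
    (i : B ⥤ A) (e : A ⥤ B) (l : B ⥤ A) [e.Faithful]
    [PreservesFiniteLimits e] [PreservesFiniteColimits e]
    [∀ J : Type v, PreservesColimitsOfShape (Discrete J) i]
    (adj : l ⊣ e) (η : i ⋙ e ≅ 𝟭 B)
    (q : A ⥤ B) (adjq : q ⊣ i)
    {P₁ P₀ : B} (hP₁ : Projective P₁) (hP₀ : Projective P₀) {Ao : A}
    (δ : l.obj P₁ ⟶ l.obj P₀) (π : l.obj P₀ ⟶ Ao) [Epi π]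
    (w : δ ≫ π = 0) (hexact : (ShortComplex.mk δ π w).Exact) :
    (IsSilting δ Ao → IsSilting (q.map δ) (q.obj Ao)) ∧
    (IsPartialSilting δ Ao → IsPartialSilting (q.map δ) (q.obj Ao)) := by
  have hif : i.Faithful := ⟨fun {X Y f g} h => by
    have h2 := congrArg e.map h
    have hf := η.hom.naturality f
    have hg := η.hom.naturality g
    dsimp at hf hg
    rw [h2, hg] at hf
    exact ((cancel_epi (η.hom.app X)).1 hf).symm⟩
  have hepi : ∀ {X Y : B} (f : X ⟶ Y), Epi f → Epi (i.map f) := by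
    intro X Y f hf
    apply e.epi_of_epi_map
    have h1 : e.map (i.map f) = η.hom.app X ≫ f ≫ η.inv.app Y := by
      have := η.hom.naturality f
      dsimp at this
      rw [← Category.assoc, ← this, Category.assoc, Iso.hom_inv_id_app]
      simp
    rw [h1]
    infer_instance
  have : i.PreservesEpimorphisms := ⟨fun f hf => hepi f hf⟩
  have : q.PreservesEpimorphisms := Functor.preservesEpimorphisms_of_adjunction adjq
  have : e.PreservesEpimorphisms := inferInstance
  have hcounit : ∀ L, Epi (adjq.counit.app L) := by
    intro L
    apply i.epi_of_epi_map
    have : adjq.unit.app (i.obj L) ≫ i.map (adjq.counit.app L) = 𝟙 _ := by simp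
    exact epi_of_epi_fac this
  have hunit0 : ∀ X : B, Epi (adjq.unit.app (l.obj X)) := by
    intro X
    apply e.epi_of_epi_map
    let adj2 : l ⋙ q ⊣ 𝟭 B := (adj.comp adjq).ofNatIsoRight η
    have h1 : IsIso (adj2.unit.app X) := by
      have : (l ⋙ q).IsEquivalence := 
        Functor.isEquivalence_of_iso (conjugateIsoEquiv Adjunction.id adj2 |>.symm (Iso.refl _)).symm
      infer_instance
    have h2 : adj2.unit.app X = (adj.unit.app X ≫ e.map (adjq.unit.app (l.obj X))) ≫
        η.hom.app _ := by
      simp [adj2, Adjunction.ofNatIsoRight]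
    rw [h2] at h1
    have h3 : IsIso (adj.unit.app X ≫ e.map (adjq.unit.app (l.obj X))) :=
      IsIso.of_isIso_comp_right _ (η.hom.app _)
    exact epi_of_epi (adj.unit.app X) _
  have hunit : Epi (adjq.unit.app Ao) := by
    have h := adjq.unit.naturality π
    dsimp at h
    have := hunit0 P₀
    have h2 : Epi (π ≫ adjq.unit.app Ao) := by
      rw [h]; infer_instance
    exact epi_of_epi π _
  have hlP : Projective (l.obj P₁) := adj.map_projective _ hP₁
  refine ⟨fun h L => ?_, fun h => ⟨?_, ?_⟩⟩
  · rw [dclass_adj_s14 adjq, ← h]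
    constructor
    · rintro ⟨I, p, hp⟩
      refine ⟨I, Limits.Sigma.map (fun _ => adjq.unit.app Ao) ≫
        (PreservesCoproduct.iso i (fun _ : I => q.obj Ao)).inv ≫ i.map p, ?_⟩
      infer_instance
    · rintro ⟨I, p, hp⟩
      have : PreservesColimitsOfShape (Discrete I) q := adjq.leftAdjoint_preservesColimits.1
      have := hcounit L
      refine ⟨I, (PreservesCoproduct.iso q (fun _ : I => Ao)).inv ≫
        q.map p ≫ adjq.counit.app L, ?_⟩
      infer_instance
  · rw [dclass_adj_s14 adjq]
    exact dclass_epi δ (adjq.unit.app Ao) h.1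
  · intro I f hf
    rw [dclass_adj_s14 adjq]
    have := h.2 I (fun j => i.obj (f j)) (fun j => (dclass_adj_s14 adjq δ _).1 (hf j))
    exact dclass_epi δ (PreservesCoproduct.iso i f).inv this
end

section
/- Let (B, A, i, e, l) be a cleft extension of abelian categories in which A and B have arbitrary coproducts and i preserves coproducts, let q : A → B be a left adjoint of i, and let B be an object of B. If l(B) is silting (respectively, partial silting) in A with respect to a projective presentation δ of l(B), then B is silting (respectively, partial silting) in B with respect to q(δ). -/
open CategoryTheory Limits

universe v u₁ u₂

theorem DClass.of_epi {C : Type u₁} [Category.{v} C] {X Y L M : C} {σ : X ⟶ Y}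
    (hX : Projective X) (h : DClass σ L) (p : L ⟶ M) [Epi p] : DClass σ M := by
  intro f
  obtain ⟨g, hg⟩ := h (Projective.factorThru f p)
  refine ⟨g ≫ p, ?_⟩
  have hg' : σ ≫ g = Projective.factorThru f p := hg
  change σ ≫ g ≫ p = f
  rw [← Category.assoc, hg', Projective.factorThru_comp]

theorem DClass.adj_iff {A : Type u₁} {B : Type u₂} [Category.{v} A] [Category.{v} B]
    {i : B ⥤ A} {q : A ⥤ B} (adjq : q ⊣ i) {X Y : A} (σ : X ⟶ Y) (L : B) :
    DClass (q.map σ) L ↔ DClass σ (i.obj L) := by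
  constructor
  · intro h f
    obtain ⟨g, hg⟩ := h ((adjq.homEquiv _ _).symm f)
    refine ⟨adjq.homEquiv _ _ g, ?_⟩
    have hg' : q.map σ ≫ g = (adjq.homEquiv _ _).symm f := hg
    change σ ≫ _ = f
    rw [← adjq.homEquiv_naturality_left, hg', Equiv.apply_symm_apply]
  · intro h f
    obtain ⟨g, hg⟩ := h (adjq.homEquiv _ _ f)
    refine ⟨(adjq.homEquiv _ _).symm g, ?_⟩
    have hg' : σ ≫ g = adjq.homEquiv _ _ f := hg
    change q.map σ ≫ _ = f
    rw [← adjq.homEquiv_naturality_left_symm, hg', Equiv.symm_apply_apply]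

/-- Let `(B, A, i, e, l)` be a cleft extension of abelian categories with
arbitrary coproducts in which `i` preserves coproducts, let `q : A ⥤ B` be a left adjoint of
`i`, and let `Bo` be an object of `B`. If `l(Bo)` is silting (resp. partial silting) in `A` with
respect to a projective presentation `Q₁ ⟶δ Q₀ ⟶π l(Bo) ⟶ 0`, then `Bo` is silting
(resp. partial silting) in `B` with respect to `q(δ)`. -/
theorem stmt15 {A : Type u₁} {B : Type u₂} [Category.{v} A] [Category.{v} B]
    [Abelian A] [Abelian B] [EnoughProjectives A] [EnoughProjectives B]
    [HasCoproducts.{v} A] [HasCoproducts.{v} B]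
    (i : B ⥤ A) (e : A ⥤ B) (l : B ⥤ A) [e.Faithful]
    [PreservesFiniteLimits e] [PreservesFiniteColimits e]
    [∀ J : Type v, PreservesColimitsOfShape (Discrete J) i]
    (adj : l ⊣ e) (η : i ⋙ e ≅ 𝟭 B)
    (q : A ⥤ B) (adjq : q ⊣ i)
    (Bo : B) {Q₁ Q₀ : A} (hQ₁ : Projective Q₁) (hQ₀ : Projective Q₀)
    (δ : Q₁ ⟶ Q₀) (π : Q₀ ⟶ l.obj Bo) [Epi π]
    (w : δ ≫ π = 0) (hexact : (ShortComplex.mk δ π w).Exact) :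
    (IsSilting δ (l.obj Bo) → IsSilting (q.map δ) Bo) ∧
    (IsPartialSilting δ (l.obj Bo) → IsPartialSilting (q.map δ) Bo) := by
  have hif : i.Faithful := by
    have : (i ⋙ e).Faithful := Functor.Faithful.of_iso η.symm
    exact Functor.Faithful.of_comp i e
  have hε : ∀ X, Epi (adj.counit.app X) := fun X => inferInstance
  have hεq : ∀ X, Epi (adjq.counit.app X) := fun X => inferInstance
  let p : l.obj Bo ⟶ i.obj Bo := l.map (η.inv.app Bo) ≫ adj.counit.app (i.obj Bo)
  have hp : Epi p := epi_comp _ _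
  let ql : l ⋙ q ≅ 𝟭 B := ((conjugateIsoEquiv (adj.comp adjq) Adjunction.id).symm η).symm
  have hiE : ∀ {X Y : B} (f : X ⟶ Y) [Epi f], Epi (i.map f) := by
    intro X Y f _
    apply e.epi_of_epi_map
    have : e.map (i.map f) = η.hom.app X ≫ f ≫ η.inv.app Y := by
      have := η.hom.naturality f
      simp only [Functor.comp_map, Functor.id_map] at this
      rw [← reassoc_of% this]
      simp
    rw [this]
    infer_instance
  refine ⟨fun h L => ?_, fun h => ⟨?_, ?_⟩⟩
  · rw [DClass.adj_iff adjq, ← h]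
    constructor
    · rintro ⟨I, r, hr⟩
      refine ⟨I, Limits.Sigma.map (fun _ => p) ≫
        (PreservesCoproduct.iso i (fun _ : I => Bo)).inv ≫ i.map r, ?_⟩
      have := hiE r
      infer_instance
    · rintro ⟨I, r, hr⟩
      have := adjq.leftAdjoint_preservesColimits
      have : q.PreservesEpimorphisms := q.preservesEpimorphisms_of_adjunction adjq
      refine ⟨I, Limits.Sigma.map (fun _ => ql.inv.app Bo) ≫
        (PreservesCoproduct.iso q (fun _ : I => l.obj Bo)).inv ≫ q.map r ≫
          adjq.counit.app L, ?_⟩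
      have := hεq L
      infer_instance
  · rw [DClass.adj_iff adjq]
    exact h.1.of_epi hQ₁ p
  · intro I f hf
    rw [DClass.adj_iff adjq]
    have := h.2 I (fun j => i.obj (f j)) (fun j => (DClass.adj_iff adjq δ _).1 (hf j))
    exact this.of_epi hQ₁ (PreservesCoproduct.iso i f).inv
end
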